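/- Let p and (p_k)_{k∈ℕ} be Borel probability measures on SL(2,ℝ) with finite first moment (i.e. elements of P₁(SL(2,ℝ))), and suppose W₁(p_k, p) → 0 as k → ∞. Then liminf_{k→∞} λ₋(p_k) ≥ λ₋(p). In other words, the function p ↦ λ₋(p) is lower semicontinuous on P₁(SL(2,ℝ)) with respect to the Wasserstein topology. -/

import Mathlib

open MeasureTheory Filter Topology Matrix
open scoped ENNReal

noncomputable section

abbrev SL2 : Type := Matrix.SpecialLinearGroup (Fin 2) ℝ

/-- Topology on `SL(2,ℝ)` induced from the (finite-dimensional) space of matrices. -/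
instance : TopologicalSpace SL2 :=
  TopologicalSpace.induced (fun α : SL2 => (α : Matrix (Fin 2) (Fin 2) ℝ)) inferInstance

/-- Borel σ-algebra on `SL(2,ℝ)`. -/
instance : MeasurableSpace SL2 := borel SL2

/-- The ℓ² operator norm of a 2×2 real matrix. -/
noncomputable def opNorm (A : Matrix (Fin 2) (Fin 2) ℝ) : ℝ :=
  ‖LinearMap.toContinuousLinearMap (Matrix.toEuclideanLin A)‖

/-- Distance on `SL(2,ℝ)` induced by the operator norm. -/
noncomputable def dSL (α β : SL2) : ℝ :=
  opNorm ((α : Matrix (Fin 2) (Fin 2) ℝ) - (β : Matrix (Fin 2) (Fin 2) ℝ))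

/-- The sequence `n ↦ (1/n) ∫ log (nrm (B(β_{n-1}) ⋯ B(β_1) B(β_0))) dqⁿ`. -/
noncomputable def lyapSeq {X G : Type*} [MeasurableSpace X] [Monoid G]
    (B : X → G) (nrm : G → ℝ) (q : Measure X) [SigmaFinite q] : ℕ → ℝ := fun n =>
  (n : ℝ)⁻¹ * ∫ ω : Fin n → X,
    Real.log (nrm ((List.ofFn fun i => B (ω i)).reverse.prod)) ∂(Measure.pi fun _ => q)

/-- Top Lyapunov exponent of the i.i.d. cocycle generated by `B` with distribution `q`,
`λ₊(B,q) = lim_n (1/n) ∫ log (nrm (B(β_{n-1}) ⋯ B(β_0))) dqⁿ`. -/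
noncomputable def lyapCocycle {X G : Type*} [MeasurableSpace X] [Monoid G]
    (B : X → G) (nrm : G → ℝ) (q : Measure X) [SigmaFinite q] : ℝ :=
  limUnder atTop (lyapSeq B nrm q)

/-- Top Lyapunov exponent of i.i.d. products of matrices in `SL(2,ℝ)`. -/
noncomputable def lyapPlus (p : Measure SL2) [SigmaFinite p] : ℝ :=
  lyapCocycle id (fun α : SL2 => opNorm (α : Matrix (Fin 2) (Fin 2) ℝ)) p

/-- Bottom Lyapunov exponent of i.i.d. products of matrices in `SL(2,ℝ)`:
`λ₋(p) = lim_n (1/n) ∫ log (‖(α_{n-1}⋯α₀)⁻¹‖⁻¹) dpⁿ`. -/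
noncomputable def lyapMinus (p : Measure SL2) [SigmaFinite p] : ℝ :=
  lyapCocycle id (fun α : SL2 => (opNorm ((α⁻¹ : SL2) : Matrix (Fin 2) (Fin 2) ℝ))⁻¹) p

/-- Wasserstein-1 distance of two measures, with respect to a distance function `d`:
the infimum over all couplings `π` of `μ` and `ν` of `∫ d(x,y) dπ`. -/
noncomputable def W1 {M : Type*} [MeasurableSpace M] (d : M → M → ℝ) (μ ν : Measure M) : ℝ≥0∞ :=
  ⨅ (π : Measure (M × M)) (_ : π.map Prod.fst = μ) (_ : π.map Prod.snd = ν),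
    ∫⁻ x, ENNReal.ofReal (d x.1 x.2) ∂π


section Helpers

open scoped Matrix.Norms.L2Operator

theorem instBorelSpaceSL2 : BorelSpace SL2 := ⟨rfl⟩

lemma SL2_continuous_coe : Continuous (fun α : SL2 => (α : Matrix (Fin 2) (Fin 2) ℝ)) :=
  continuous_induced_dom

attribute [local instance] instBorelSpaceSL2

theorem instSecondCountableSL2 : SecondCountableTopology SL2 :=
  haveI : SecondCountableTopology (Matrix (Fin 2) (Fin 2) ℝ) :=
    inferInstanceAs (SecondCountableTopology (Fin 2 → Fin 2 → ℝ))
  Topology.IsInducing.secondCountableTopology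
    (f := fun α : SL2 => (α : Matrix (Fin 2) (Fin 2) ℝ)) ⟨rfl⟩

attribute [local instance] instSecondCountableSL2

lemma opNorm_eq (A : Matrix (Fin 2) (Fin 2) ℝ) : opNorm A = ‖A‖ := rfl

lemma norm_adjugate_le (A : Matrix (Fin 2) (Fin 2) ℝ) : ‖A.adjugate‖ ≤ ‖A‖ := by
  set J : Matrix (Fin 2) (Fin 2) ℝ := !![0, 1; -1, 0] with hJ
  have h1 : Jᴴ * J = 1 := by
    ext i j
    fin_cases i <;> fin_cases j <;> simp [hJ, Matrix.mul_apply]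
  have h2 : ‖J‖ = 1 := by
    have := Matrix.l2_opNorm_conjTranspose_mul_self J
    rw [h1, CStarRing.norm_one] at this
    nlinarith [norm_nonneg J]
  have h3 : A.adjugate = J * Aᴴ * Jᴴ := by
    rw [Matrix.adjugate_fin_two]
    ext i j
    fin_cases i <;> fin_cases j <;>
      simp [hJ, Matrix.mul_apply, Matrix.vecMul, dotProduct, Fin.sum_univ_two]
  rw [h3]
  calc ‖J * Aᴴ * Jᴴ‖ ≤ ‖J‖ * ‖Aᴴ‖ * ‖Jᴴ‖ :=
        (norm_mul_le _ _).trans (mul_le_mul_of_nonneg_right (norm_mul_le _ _) (norm_nonneg _))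
    _ = ‖A‖ := by rw [Matrix.l2_opNorm_conjTranspose, Matrix.l2_opNorm_conjTranspose, h2]; ring

lemma norm_inv_SL2 (α : SL2) :
    ‖((α⁻¹ : SL2) : Matrix (Fin 2) (Fin 2) ℝ)‖ = ‖(α : Matrix (Fin 2) (Fin 2) ℝ)‖ := by
  apply le_antisymm
  · rw [Matrix.SpecialLinearGroup.coe_inv]
    exact norm_adjugate_le _
  · have := norm_adjugate_le ((α⁻¹ : SL2) : Matrix (Fin 2) (Fin 2) ℝ)
    rwa [← Matrix.SpecialLinearGroup.coe_inv, inv_inv] at this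

lemma one_le_norm_SL2 (α : SL2) : 1 ≤ ‖(α : Matrix (Fin 2) (Fin 2) ℝ)‖ := by
  have h : (α : Matrix (Fin 2) (Fin 2) ℝ) * ((α⁻¹ : SL2) : Matrix (Fin 2) (Fin 2) ℝ) = 1 := by
    rw [← Matrix.SpecialLinearGroup.coe_mul, mul_inv_cancel, Matrix.SpecialLinearGroup.coe_one]
  have h2 := norm_mul_le (α : Matrix (Fin 2) (Fin 2) ℝ) ((α⁻¹ : SL2) : Matrix (Fin 2) (Fin 2) ℝ)
  rw [h, norm_inv_SL2, CStarRing.norm_one] at h2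
  nlinarith [norm_nonneg (α : Matrix (Fin 2) (Fin 2) ℝ)]

/-- The product `ω_{n-1} ⋯ ω_0`. -/
def prodSL {n : ℕ} (ω : Fin n → SL2) : SL2 := (List.ofFn ω).reverse.prod

/-- The norm of an element of `SL(2,ℝ)`. -/
def nSL (α : SL2) : ℝ := ‖(α : Matrix (Fin 2) (Fin 2) ℝ)‖

lemma one_le_nSL (α : SL2) : 1 ≤ nSL α := one_le_norm_SL2 α

lemma nSL_mul_le (α β : SL2) : nSL (α * β) ≤ nSL α * nSL β := by
  unfold nSL
  rw [Matrix.SpecialLinearGroup.coe_mul]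
  exact norm_mul_le _ _

lemma prodSL_zero (ω : Fin 0 → SL2) : prodSL ω = 1 := by simp [prodSL]

lemma prodSL_succ {n : ℕ} (ω : Fin (n + 1) → SL2) :
    prodSL ω = prodSL (fun i : Fin n => ω i.succ) * ω 0 := by
  simp [prodSL, List.ofFn_succ]

lemma prodSL_add {m n : ℕ} (ω : Fin (m + n) → SL2) :
    prodSL ω = prodSL (fun i => ω (Fin.natAdd m i)) * prodSL (fun i => ω (Fin.castAdd n i)) := by
  simp [prodSL, List.ofFn_add]
  rfl

lemma continuous_coe_prodSL (n : ℕ) :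
    Continuous (fun ω : Fin n → SL2 => (prodSL ω : Matrix (Fin 2) (Fin 2) ℝ)) := by
  induction n with
  | zero => simp only [prodSL_zero]; exact continuous_const
  | succ n ih =>
    simp only [prodSL_succ, Matrix.SpecialLinearGroup.coe_mul]
    refine Continuous.mul ?_ (SL2_continuous_coe.comp (continuous_apply 0))
    exact ih.comp (by fun_prop)

lemma continuous_nSL : Continuous nSL := SL2_continuous_coe.norm

lemma measurable_log_prod (n : ℕ) :
    Measurable (fun ω : Fin n → SL2 => Real.log (nSL (prodSL ω))) := by
  have h : Continuous (fun ω : Fin n → SL2 => nSL (prodSL ω)) := (continuous_coe_prodSL n).norm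
  exact Real.measurable_log.comp h.measurable

lemma log_prod_nonneg {n : ℕ} (ω : Fin n → SL2) : 0 ≤ Real.log (nSL (prodSL ω)) :=
  Real.log_nonneg (one_le_nSL _)

lemma log_mul_le (α β : SL2) : Real.log (nSL (α * β)) ≤ Real.log (nSL α) + Real.log (nSL β) := by
  have h1 := one_le_nSL α
  have h2 := one_le_nSL β
  have h3 := one_le_nSL (α * β)
  rw [← Real.log_mul (by linarith) (by linarith)]
  exact Real.log_le_log (by linarith) (nSL_mul_le _ _)

lemma nSL_one : nSL 1 = 1 := by
  unfold nSL
  rw [Matrix.SpecialLinearGroup.coe_one, CStarRing.norm_one]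

lemma log_prod_le_sum {n : ℕ} (ω : Fin n → SL2) :
    Real.log (nSL (prodSL ω)) ≤ ∑ i, nSL (ω i) := by
  induction n with
  | zero => simp [prodSL_zero, nSL_one]
  | succ n ih =>
    rw [prodSL_succ, Fin.sum_univ_succ]
    have h1 := log_mul_le (prodSL (fun i : Fin n => ω i.succ)) (ω 0)
    have h2 := ih (fun i : Fin n => ω i.succ)
    have h3 := Real.log_le_self (zero_le_one.trans (one_le_nSL (ω 0)))
    linarith

lemma nSL_prod_le {n : ℕ} (ω : Fin n → SL2) : nSL (prodSL ω) ≤ ∏ i, nSL (ω i) := by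
  induction n with
  | zero => simp [prodSL_zero, nSL_one]
  | succ n ih =>
    rw [prodSL_succ, Fin.prod_univ_succ, mul_comm (nSL (ω 0))]
    refine (nSL_mul_le _ _).trans ?_
    exact mul_le_mul_of_nonneg_right (ih _) (zero_le_one.trans (one_le_nSL _))

lemma dSL_nonneg (α β : SL2) : 0 ≤ dSL α β := norm_nonneg _

lemma dSL_prod_le {n : ℕ} (a b : Fin n → SL2) :
    dSL (prodSL a) (prodSL b) ≤
      ∑ i, ∏ j, (if j = i then dSL (a j) (b j) else nSL (a j) + nSL (b j)) := by
  induction n with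
  | zero => simp [prodSL_zero, dSL, opNorm_eq]
  | succ n ih =>
    rw [prodSL_succ, prodSL_succ, Fin.sum_univ_succ]
    simp only [Fin.prod_univ_succ, if_true, Fin.succ_ne_zero, if_false, Fin.succ_inj,
      (Fin.succ_ne_zero _).symm]
    rw [← Finset.mul_sum]
    set A := prodSL (fun i : Fin n => a i.succ)
    set B := prodSL (fun i : Fin n => b i.succ)
    have h1 : dSL (A * a 0) (B * b 0) ≤ dSL A B * nSL (a 0) + nSL B * dSL (a 0) (b 0) := by
      unfold dSL nSL
      simp only [opNorm_eq, Matrix.SpecialLinearGroup.coe_mul]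
      have : (A : Matrix (Fin 2) (Fin 2) ℝ) * (a 0 : Matrix (Fin 2) (Fin 2) ℝ)
          - (B : Matrix (Fin 2) (Fin 2) ℝ) * (b 0 : Matrix (Fin 2) (Fin 2) ℝ)
          = ((A : Matrix (Fin 2) (Fin 2) ℝ) - (B : Matrix (Fin 2) (Fin 2) ℝ)) * (a 0 : Matrix (Fin 2) (Fin 2) ℝ)
          + (B : Matrix (Fin 2) (Fin 2) ℝ) * ((a 0 : Matrix (Fin 2) (Fin 2) ℝ) - (b 0 : Matrix (Fin 2) (Fin 2) ℝ)) := by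
        noncomm_ring
      rw [this]
      exact (norm_add_le _ _).trans (add_le_add (norm_mul_le _ _) (norm_mul_le _ _))
    have h2 : dSL A B ≤ _ := ih (fun i => a i.succ) (fun i => b i.succ)
    have h3 : nSL B ≤ ∏ i : Fin n, (nSL (a i.succ) + nSL (b i.succ)) := by
      refine (nSL_prod_le _).trans (Finset.prod_le_prod (fun i _ => ?_) (fun i _ => ?_))
      · exact zero_le_one.trans (one_le_nSL _)
      · linarith [one_le_nSL (a i.succ)]
    have h4 : dSL A B * nSL (a 0) ≤ dSL A B * (nSL (a 0) + nSL (b 0)) :=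
      mul_le_mul_of_nonneg_left (by linarith [one_le_nSL (b 0)]) (dSL_nonneg _ _)
    have h5 := mul_le_mul_of_nonneg_right h2
      (show 0 ≤ nSL (a 0) + nSL (b 0) by linarith [one_le_nSL (b 0), one_le_nSL (a 0)])
    have h6 := mul_le_mul_of_nonneg_right h3 (dSL_nonneg (a 0) (b 0))
    linarith

lemma nSL_le (α β : SL2) : nSL α ≤ nSL β + dSL α β := by
  unfold nSL dSL
  rw [opNorm_eq]
  have := norm_sub_norm_le (α : Matrix (Fin 2) (Fin 2) ℝ) (β : Matrix (Fin 2) (Fin 2) ℝ)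
  linarith

lemma log_nSL_le (α β : SL2) : Real.log (nSL α) ≤ Real.log (nSL β) + dSL α β := by
  have ha := one_le_nSL α
  have hb := one_le_nSL β
  have h1 : Real.log (nSL α) - Real.log (nSL β) ≤ nSL α / nSL β - 1 := by
    rw [← Real.log_div (by linarith) (by linarith)]
    exact Real.log_le_sub_one_of_pos (by positivity)
  have h2 : nSL α / nSL β - 1 ≤ dSL α β := by
    rw [sub_le_iff_le_add, div_le_iff₀ (by linarith)]
    nlinarith [nSL_le α β, dSL_nonneg α β]
  linarith

/-- `∫ log ‖ω_{n-1} ⋯ ω_0‖ dqⁿ`. -/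
def uSeq (q : Measure SL2) [IsProbabilityMeasure q] (n : ℕ) : ℝ :=
  ∫ ω : Fin n → SL2, Real.log (nSL (prodSL ω)) ∂(Measure.pi fun _ => q)

lemma lyapSeq_eq (q : Measure SL2) [IsProbabilityMeasure q] :
    lyapSeq id (fun α : SL2 => (opNorm ((α⁻¹ : SL2) : Matrix (Fin 2) (Fin 2) ℝ))⁻¹) q
      = fun n => -(uSeq q n / n) := by
  funext n
  simp only [lyapSeq, opNorm_eq, norm_inv_SL2, Real.log_inv, integral_neg, uSeq, id]
  unfold nSL prodSL
  rw [div_eq_inv_mul]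
  ring

lemma continuous_opNorm : Continuous opNorm :=
  continuous_norm (E := Matrix (Fin 2) (Fin 2) ℝ)

lemma dSL_measurable : Measurable (fun x : SL2 × SL2 => dSL x.1 x.2) := by
  have c1 : Continuous (fun x : SL2 × SL2 => (x.1 : Matrix (Fin 2) (Fin 2) ℝ)) :=
    SL2_continuous_coe.comp continuous_fst
  have c2 : Continuous (fun x : SL2 × SL2 => (x.2 : Matrix (Fin 2) (Fin 2) ℝ)) :=
    SL2_continuous_coe.comp continuous_snd
  have hc : Continuous (fun x : SL2 × SL2 =>
      (x.1 : Matrix (Fin 2) (Fin 2) ℝ) - (x.2 : Matrix (Fin 2) (Fin 2) ℝ)) := by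
    refine continuous_matrix fun i j => ?_
    simp only [Matrix.sub_apply]
    exact Continuous.sub (c1.matrix_elem i j) (c2.matrix_elem i j)
  have h : Continuous (fun x : SL2 × SL2 => dSL x.1 x.2) := continuous_opNorm.comp hc
  exact h.measurable

lemma integrable_nSL (q : Measure SL2) [IsProbabilityMeasure q]
    (hq : ∫⁻ α, ENNReal.ofReal (dSL 1 α) ∂q < ⊤) : Integrable nSL q := by
  have hm : Measurable (fun α : SL2 => dSL 1 α) := by
    have h := dSL_measurable.comp (measurable_prodMk_left (x := (1 : SL2)) (β := SL2))
    simpa only [Function.comp_def] using h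
  have hd : Integrable (fun α : SL2 => dSL 1 α) q := by
    refine ⟨hm.aestronglyMeasurable, ?_⟩
    rw [hasFiniteIntegral_iff_ofReal (ae_of_all _ fun α => dSL_nonneg _ _)]
    exact hq
  refine Integrable.mono' ((integrable_const (1 : ℝ)).add hd)
    continuous_nSL.measurable.aestronglyMeasurable (ae_of_all _ fun α => ?_)
  have hs : dSL α 1 = dSL 1 α := by
    unfold dSL
    rw [opNorm_eq, opNorm_eq, norm_sub_rev]
  have := nSL_le α 1
  rw [nSL_one, hs] at this
  rw [Real.norm_of_nonneg (zero_le_one.trans (one_le_nSL α))]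
  simpa using this

lemma integrable_log_prod (q : Measure SL2) [IsProbabilityMeasure q] (hq : Integrable nSL q)
    (n : ℕ) : Integrable (fun ω : Fin n → SL2 => Real.log (nSL (prodSL ω)))
      (Measure.pi fun _ => q) := by
  have : Integrable (fun ω : Fin n → SL2 => ∑ i, nSL (ω i)) (Measure.pi fun _ => q) :=
    integrable_finsetSum _ fun i _ => integrable_comp_eval (μ := fun _ : Fin n => q) (i := i) hq
  refine this.mono' (measurable_log_prod n).aestronglyMeasurable (ae_of_all _ fun ω => ?_)
  rw [Real.norm_of_nonneg (log_prod_nonneg ω)]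
  exact log_prod_le_sum ω

lemma map_precomp (q : Measure SL2) [IsProbabilityMeasure q] {m N : ℕ} (e : Fin m → Fin N)
    (he : Function.Injective e) :
    MeasurePreserving (fun (ω : Fin N → SL2) (i : Fin m) => ω (e i))
      (Measure.pi fun _ => q) (Measure.pi fun _ => q) := by
  refine ⟨by fun_prop, ?_⟩
  have h := ProbabilityTheory.iIndepFun_pi (μ := fun _ : Fin N => q) (X := fun _ => id)
    (fun i => aemeasurable_id)
  have h2 := h.precomp he
  simp only [id] at h2
  rw [ProbabilityTheory.iIndepFun_iff_map_fun_eq_pi_map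
    (fun i => (measurable_pi_apply (e i)).aemeasurable)] at h2
  rw [h2]
  congr 1
  funext i
  exact (measurePreserving_eval (fun _ : Fin N => q) (e i)).map_eq

lemma uSeq_subadditive (q : Measure SL2) [IsProbabilityMeasure q] (hq : Integrable nSL q) :
    Subadditive (uSeq q) := by
  intro m n
  have h1 := map_precomp q (Fin.castAdd n : Fin m → Fin (m + n)) (Fin.castAdd_injective m n)
  have h2 := map_precomp q (Fin.natAdd m : Fin n → Fin (m + n)) (Fin.natAdd_injective n m)
  have i1 := h1.integrable_comp_of_integrable (integrable_log_prod q hq m)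
  have i2 := h2.integrable_comp_of_integrable (integrable_log_prod q hq n)
  have e1 : uSeq q m = ∫ ω : Fin (m + n) → SL2,
      Real.log (nSL (prodSL (fun i => ω (Fin.castAdd n i)))) ∂(Measure.pi fun _ => q) := by
    unfold uSeq
    conv_lhs => rw [← h1.map_eq, integral_map h1.measurable.aemeasurable
      (measurable_log_prod m).aestronglyMeasurable]
  have e2 : uSeq q n = ∫ ω : Fin (m + n) → SL2,
      Real.log (nSL (prodSL (fun i => ω (Fin.natAdd m i)))) ∂(Measure.pi fun _ => q) := by
    unfold uSeq
    conv_lhs => rw [← h2.map_eq, integral_map h2.measurable.aemeasurable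
      (measurable_log_prod n).aestronglyMeasurable]
  simp only [Function.comp_def] at i1 i2
  rw [e1, e2, ← integral_add i1 i2]
  refine integral_mono (integrable_log_prod q hq (m + n)) (i1.add i2) fun ω => ?_
  have := log_mul_le (prodSL (fun i => ω (Fin.natAdd m i))) (prodSL (fun i => ω (Fin.castAdd n i)))
  rw [← prodSL_add] at this
  simp only
  linarith

lemma uSeq_nonneg (q : Measure SL2) [IsProbabilityMeasure q] (n : ℕ) : 0 ≤ uSeq q n :=
  integral_nonneg fun ω => log_prod_nonneg ω

lemma uSeq_bdd (q : Measure SL2) [IsProbabilityMeasure q] :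
    BddBelow (Set.range fun n : ℕ => uSeq q n / n) := by
  refine ⟨0, ?_⟩
  rintro _ ⟨n, rfl⟩
  exact div_nonneg (uSeq_nonneg q n) n.cast_nonneg

lemma lyapMinus_eq (q : Measure SL2) [IsProbabilityMeasure q] (hq : Integrable nSL q) :
    lyapMinus q = -(uSeq_subadditive q hq).lim := by
  unfold lyapMinus lyapCocycle
  rw [lyapSeq_eq]
  exact ((uSeq_subadditive q hq).tendsto_lim (uSeq_bdd q)).neg.limUnder_eq

lemma uSeq_le_coupling (q p : Measure SL2) [IsProbabilityMeasure q] [IsProbabilityMeasure p]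
    (hq : Integrable nSL q) (hp : Integrable nSL p)
    (π : Measure (SL2 × SL2)) (h1 : π.map Prod.fst = q) (h2 : π.map Prod.snd = p)
    (hd : Integrable (fun x : SL2 × SL2 => dSL x.1 x.2) π) (n : ℕ) :
    uSeq q n ≤ uSeq p n + n * ((∫ x, dSL x.1 x.2 ∂π) *
      (2 * (∫ x, nSL x ∂p) + ∫ x, dSL x.1 x.2 ∂π) ^ (n - 1)) := by
  have hπ : IsProbabilityMeasure π := by
    constructor
    have : (π.map Prod.fst) Set.univ = 1 := by rw [h1]; exact measure_univ
    rwa [Measure.map_apply measurable_fst MeasurableSet.univ, Set.preimage_univ] at this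
  have m1 : MeasurePreserving Prod.fst π q := ⟨measurable_fst, h1⟩
  have m2 : MeasurePreserving Prod.snd π p := ⟨measurable_snd, h2⟩
  have M1 : MeasurePreserving (fun (ω : Fin n → SL2 × SL2) i => (ω i).1)
      (Measure.pi fun _ => π) (Measure.pi fun _ => q) :=
    measurePreserving_pi (fun _ => π) (fun _ => q) (fun _ => m1)
  have M2 : MeasurePreserving (fun (ω : Fin n → SL2 × SL2) i => (ω i).2)
      (Measure.pi fun _ => π) (Measure.pi fun _ => p) :=
    measurePreserving_pi (fun _ => π) (fun _ => p) (fun _ => m2)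
  have i1 := M1.integrable_comp_of_integrable (integrable_log_prod q hq n)
  have i2 := M2.integrable_comp_of_integrable (integrable_log_prod p hp n)
  simp only [Function.comp_def] at i1 i2
  have e1 : uSeq q n = ∫ ω : Fin n → SL2 × SL2,
      Real.log (nSL (prodSL (fun i => (ω i).1))) ∂(Measure.pi fun _ => π) := by
    unfold uSeq
    rw [← M1.map_eq, integral_map M1.measurable.aemeasurable
      (measurable_log_prod n).aestronglyMeasurable]
  have e2 : uSeq p n = ∫ ω : Fin n → SL2 × SL2,
      Real.log (nSL (prodSL (fun i => (ω i).2))) ∂(Measure.pi fun _ => π) := by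
    unfold uSeq
    rw [← M2.map_eq, integral_map M2.measurable.aemeasurable
      (measurable_log_prod n).aestronglyMeasurable]
  have j1 : Integrable (fun x : SL2 × SL2 => nSL x.1) π := m1.integrable_comp_of_integrable hq
  have j2 : Integrable (fun x : SL2 × SL2 => nSL x.2) π := m2.integrable_comp_of_integrable hp
  have k2 : ∫ x, nSL x.2 ∂π = ∫ x, nSL x ∂p := by
    rw [← h2, integral_map measurable_snd.aemeasurable
      continuous_nSL.measurable.aestronglyMeasurable]
  -- the telescoping functions
  let g : Fin n → Fin n → SL2 × SL2 → ℝ := fun i j x =>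
    if j = i then dSL x.1 x.2 else nSL x.1 + nSL x.2
  have hg : ∀ i j, Integrable (g i j) π := by
    intro i j
    by_cases h : j = i
    · simp only [g, h, if_true]; exact hd
    · simp only [g, h, if_false]; exact j1.add j2
  have hG : ∀ i, Integrable (fun ω : Fin n → SL2 × SL2 => ∏ j, g i j (ω j))
      (Measure.pi fun _ => π) := fun i => Integrable.fintype_prod (hg i)
  have hGs : Integrable (fun ω : Fin n → SL2 × SL2 => ∑ i, ∏ j, g i j (ω j))
      (Measure.pi fun _ => π) := integrable_finsetSum _ fun i _ => hG i
  have hle : uSeq q n ≤ uSeq p n + ∑ i, ∏ j, ∫ x, g i j x ∂π := by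
    have : ∑ i, ∏ j, ∫ x, g i j x ∂π
        = ∫ ω : Fin n → SL2 × SL2, ∑ i, ∏ j, g i j (ω j) ∂(Measure.pi fun _ => π) := by
      rw [integral_finsetSum _ fun i _ => hG i]
      refine Finset.sum_congr rfl fun i _ => ?_
      exact (integral_fintype_prod_eq_prod (μ := fun _ => π) (g i)).symm
    rw [this, e1, e2, ← integral_add i2 hGs]
    refine integral_mono i1 (i2.add hGs) fun ω => ?_
    exact (log_nSL_le _ _).trans (add_le_add le_rfl (dSL_prod_le _ _))
  refine hle.trans (add_le_add le_rfl ?_)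
  have hdn : 0 ≤ ∫ x, dSL x.1 x.2 ∂π := integral_nonneg fun x => dSL_nonneg _ _
  have hK0 : 0 ≤ ∫ x, (nSL x.1 + nSL x.2) ∂π := integral_nonneg fun x => by
    have a1 := one_le_nSL x.1
    have a2 := one_le_nSL x.2
    show 0 ≤ nSL x.1 + nSL x.2
    linarith
  have hK : ∫ x, (nSL x.1 + nSL x.2) ∂π ≤ 2 * (∫ x, nSL x ∂p) + ∫ x, dSL x.1 x.2 ∂π := by
    rw [← k2, ← integral_const_mul, ← integral_add (j2.const_mul 2) hd]
    refine integral_mono (j1.add j2) ((j2.const_mul 2).add hd) fun x => ?_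
    have := nSL_le x.1 x.2
    show nSL x.1 + nSL x.2 ≤ 2 * nSL x.2 + dSL x.1 x.2
    linarith
  have hprod : ∀ i : Fin n, ∏ j, ∫ x, g i j x ∂π ≤ (∫ x, dSL x.1 x.2 ∂π) *
      (2 * (∫ x, nSL x ∂p) + ∫ x, dSL x.1 x.2 ∂π) ^ (n - 1) := by
    intro i
    rw [← Finset.mul_prod_erase Finset.univ _ (Finset.mem_univ i)]
    have c1 : ∫ x, g i i x ∂π = ∫ x, dSL x.1 x.2 ∂π := by simp [g]
    have c2 : ∏ j ∈ Finset.univ.erase i, ∫ x, g i j x ∂π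
        = (∫ x, (nSL x.1 + nSL x.2) ∂π) ^ (n - 1) := by
      rw [Finset.prod_congr rfl (g := fun _ => ∫ x, (nSL x.1 + nSL x.2) ∂π)]
      · simp
      · intro j hj
        simp only [g, Finset.ne_of_mem_erase hj, if_false]
    rw [c1, c2]
    exact mul_le_mul_of_nonneg_left (pow_le_pow_left₀ hK0 hK _) hdn
  calc ∑ i, ∏ j, ∫ x, g i j x ∂π ≤ ∑ i : Fin n, _ := Finset.sum_le_sum fun i _ => hprod i
    _ = _ := by simp

end Helpers

/-- **Lower semicontinuity of the bottom Lyapunov exponent in the Wasserstein topology.**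
If `p` and the `p_k` are Borel probability measures on `SL(2,ℝ)` with finite first moment
and `W₁(p_k, p) → 0`, then `liminf_k λ₋(p_k) ≥ λ₋(p)`. -/
theorem lyapMinus_lower_semicontinuous_wasserstein
    (p : Measure SL2) (pk : ℕ → Measure SL2)
    [IsProbabilityMeasure p] [∀ k, IsProbabilityMeasure (pk k)]
    (hp : ∫⁻ α, ENNReal.ofReal (dSL 1 α) ∂p < ⊤)
    (hpk : ∀ k, ∫⁻ α, ENNReal.ofReal (dSL 1 α) ∂(pk k) < ⊤)
    (hW : Tendsto (fun k => W1 dSL (pk k) p) atTop (𝓝 0)) :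
    lyapMinus p ≤ Filter.liminf (fun k => lyapMinus (pk k)) atTop := by
  have ip := integrable_nSL p hp
  have ik := fun k => integrable_nSL (pk k) (hpk k)
  have hnonpos : ∀ k, lyapMinus (pk k) ≤ 0 := by
    intro k
    rw [lyapMinus_eq (pk k) (ik k), neg_nonpos]
    refine ge_of_tendsto' ((uSeq_subadditive (pk k) (ik k)).tendsto_lim (uSeq_bdd _)) fun n => ?_
    exact div_nonneg (uSeq_nonneg _ n) n.cast_nonneg
  have hcob : IsCoboundedUnder (· ≥ ·) atTop (fun k => lyapMinus (pk k)) :=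
    (isBoundedUnder_of ⟨0, hnonpos⟩ : IsBoundedUnder (· ≤ ·) atTop _).isCoboundedUnder_ge
  refine le_of_forall_lt_imp_le_of_dense fun b hb => le_liminf_of_le hcob ?_
  rw [lyapMinus_eq p ip] at hb
  have hlim := (uSeq_subadditive p ip).tendsto_lim (uSeq_bdd p)
  obtain ⟨n, hn, hn1⟩ :=
    ((hlim.eventually_lt_const (show _ < -b by linarith)).and (eventually_ge_atTop 1)).exists
  have hn0 : (0 : ℝ) < n := by exact_mod_cast hn1
  rw [div_lt_iff₀ hn0] at hn
  set E := ∫ x, nSL x ∂p with hE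
  have hE0 : 0 ≤ E := integral_nonneg fun x => zero_le_one.trans (one_le_nSL x)
  have htend : Tendsto (fun t : ℝ => uSeq p n + n * (t * (2 * E + t) ^ (n - 1))) (𝓝 0)
      (𝓝 (uSeq p n)) := by
    have : Continuous (fun t : ℝ => uSeq p n + n * (t * (2 * E + t) ^ (n - 1))) := by fun_prop
    simpa using this.tendsto 0
  obtain ⟨δ, hδ, hδ2⟩ := Metric.eventually_nhds_iff.1 (htend.eventually_lt_const hn)
  filter_upwards [hW.eventually_lt_const (ENNReal.ofReal_pos.2 hδ)] with k hk
  unfold W1 at hk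
  simp only [iInf_lt_iff] at hk
  obtain ⟨π, h1, h2, h3⟩ := hk
  have hd : Integrable (fun x : SL2 × SL2 => dSL x.1 x.2) π := by
    refine ⟨dSL_measurable.aestronglyMeasurable, ?_⟩
    rw [hasFiniteIntegral_iff_ofReal (ae_of_all _ fun α => dSL_nonneg _ _)]
    exact h3.trans ENNReal.ofReal_lt_top
  have ht0 : 0 ≤ ∫ x, dSL x.1 x.2 ∂π := integral_nonneg fun x => dSL_nonneg _ _
  have ht : ∫ x, dSL x.1 x.2 ∂π < δ := by
    rw [← ofReal_integral_eq_lintegral_ofReal hd (ae_of_all _ fun α => dSL_nonneg _ _)] at h3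
    exact (ENNReal.ofReal_lt_ofReal_iff hδ).1 h3
  have key := uSeq_le_coupling (pk k) p (ik k) ip π h1 h2 hd n
  have key2 := hδ2 (y := ∫ x, dSL x.1 x.2 ∂π)
    (by rw [Real.dist_eq, sub_zero, abs_of_nonneg ht0]; exact ht)
  have h5 : uSeq (pk k) n / n ≤ -b := by
    rw [div_le_iff₀ hn0]
    exact key.trans key2.le
  have h6 := (uSeq_subadditive (pk k) (ik k)).lim_le_div (uSeq_bdd (pk k)) (n := n) (by omega)
  rw [lyapMinus_eq (pk k) (ik k)]
  linarith
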